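/- Let −1 < β < 0 and ν > −1/2. Then for all x > 0, ( e^{−βx} K_{ν+1}(x) / x^{ν−1} ) · ∫_0^x e^{βt} t^ν I_ν(t) dt < (2ν+7) / (2(2ν+1)(1+β)). -/

import Mathlib

open Real MeasureTheory

/-- Modified Bessel function of the first kind, `I_ν(x) = ∑_{k} (x/2)^{ν+2k} / (Γ(ν+k+1) k!)`. -/
noncomputable def besselI (ν x : ℝ) : ℝ :=
  ∑' k : ℕ, (x / 2) ^ (ν + 2 * (k : ℝ)) / (Real.Gamma (ν + (k : ℝ) + 1) * (Nat.factorial k : ℝ))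

/-- Modified Bessel function of the second kind, `K_ν(x) = ∫_0^∞ e^{-x cosh t} cosh(ν t) dt`. -/
noncomputable def besselK (ν x : ℝ) : ℝ :=
  ∫ t in Set.Ioi (0 : ℝ), Real.exp (-x * Real.cosh t) * Real.cosh (ν * t)

/-- Lower incomplete gamma function `γ(a, x) = ∫_0^x t^{a-1} e^{-t} dt`. -/
noncomputable def lowerIncGamma (a x : ℝ) : ℝ :=
  ∫ t in (0 : ℝ)..x, t ^ (a - 1) * Real.exp (-t)

/-!
The recurrences for `I_ν` and `K_ν` give the Wronskian identity
`x (I_ν(x) K_{ν+1}(x) + I_{ν+1}(x) K_ν(x)) = 1`, hence `x I_ν(x) K_{ν+1}(x) ≤ 1`. Combined with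
`(x + ν + 1 / 2) I_{ν+1}(x) ≤ x I_ν(x)`, it shows that `P(x) = x I_{ν+1}(x) K_{ν+1}(x)` satisfies
`P' ≥ 2 P - 1`; as `P` is bounded, `P ≤ 1 / 2`. It remains to bound the integral of
`e^{βt} t ^ ν I_ν(t)` by multiples of `e^{βx} x ^ ν I_ν(x)` and `e^{βx} x ^ ν I_{ν+1}(x)`. For
`ν < 1`, integrate by parts against the explicit primitive of `e^{-t} t ^ ν I_ν(t)`; for `ν ≥ 1`,
compare `e^{βx} x ^ ν I_ν(x)` with the derivative of `e^{βx} x ^ ν I_{ν+1}(x)`.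
-/

section BesselClifford

/-- The coefficient `1 / (Γ(ν + k + 1) k!)` of the Bessel–Clifford function. Since `Real.Gamma`
vanishes at the nonpositive integers and `0⁻¹ = 0`, it agrees with the entire function `1 / Γ` for
every real `ν`. -/
noncomputable def besselCliffordCoeff (ν : ℝ) (k : ℕ) : ℝ :=
  (Gamma (ν + k + 1) * (k.factorial : ℝ))⁻¹

/-- The Bessel–Clifford function `C_ν(z) = ∑ₖ zᵏ / (Γ(ν + k + 1) k!)`, the entire factor in
`I_ν(x) = (x / 2) ^ ν * C_ν((x / 2) ^ 2)`. -/
noncomputable def besselClifford (ν z : ℝ) : ℝ :=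
  ∑' k : ℕ, besselCliffordCoeff ν k * z ^ k

variable {ν : ℝ}

lemma besselCliffordCoeff_add_one (ν : ℝ) (k : ℕ) :
    besselCliffordCoeff (ν + 1) k = (k + 1) * besselCliffordCoeff ν (k + 1) := by
  unfold besselCliffordCoeff
  rw [Nat.factorial_succ]
  push_cast
  rw [show ν + (k + 1 : ℝ) + 1 = ν + 1 + k + 1 by ring]
  field_simp

lemma add_mul_besselCliffordCoeff_add_one (ν : ℝ) (k : ℕ) :
    (ν + k + 1) * besselCliffordCoeff (ν + 1) k = besselCliffordCoeff ν k := by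
  unfold besselCliffordCoeff
  rcases eq_or_ne (ν + k + 1) 0 with h | h
  · simp [h]
  · rw [show ν + 1 + k + 1 = ν + k + 1 + 1 by ring, Gamma_add_one h]
    field_simp

lemma besselCliffordCoeff_pos (hν : -1 < ν) (k : ℕ) : 0 < besselCliffordCoeff ν k := by
  have : 0 < ν + k + 1 := by linarith [k.cast_nonneg (α := ℝ)]
  exact inv_pos.mpr (mul_pos (Gamma_pos_of_pos this) (mod_cast k.factorial_pos))

lemma summable_besselCliffordCoeff_mul_pow (ν z : ℝ) :
    Summable fun k : ℕ ↦ besselCliffordCoeff ν k * z ^ k := by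
  refine summable_of_ratio_norm_eventually_le (r := 1 / 2) (by norm_num) ?_
  obtain ⟨N, hN⟩ := exists_nat_gt (2 * |z| + |ν|)
  filter_upwards [Filter.eventually_ge_atTop N] with k hk
  have hNk : (N : ℝ) ≤ k := mod_cast hk
  have hz := abs_nonneg z
  have hratio : 2 * |z| ≤ (ν + k + 1) * (k + 1) := by
    nlinarith [neg_abs_le ν, abs_nonneg ν]
  have hcoeff : |besselCliffordCoeff ν k| =
      (ν + k + 1) * (k + 1) * |besselCliffordCoeff ν (k + 1)| := by
    rw [← add_mul_besselCliffordCoeff_add_one, besselCliffordCoeff_add_one, ← mul_assoc, abs_mul,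
      abs_of_nonneg (by linarith)]
  rw [norm_eq_abs, norm_eq_abs, abs_mul, abs_mul, hcoeff, pow_succ, abs_mul]
  calc |besselCliffordCoeff ν (k + 1)| * (|z ^ k| * |z|)
      = 1 / 2 * (2 * |z| * |besselCliffordCoeff ν (k + 1)| * |z ^ k|) := by ring
    _ ≤ _ := by gcongr

lemma besselClifford_zero (ν : ℝ) : besselClifford ν 0 = (Gamma (ν + 1))⁻¹ := by
  rw [besselClifford, tsum_eq_single 0 fun k hk ↦ by simp [hk]]
  simp [besselCliffordCoeff]

lemma besselClifford_pos (hν : -1 < ν) {z : ℝ} (hz : 0 ≤ z) : 0 < besselClifford ν z :=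
  (summable_besselCliffordCoeff_mul_pow ν z).tsum_pos
    (fun k ↦ mul_nonneg (besselCliffordCoeff_pos hν k).le (pow_nonneg hz k)) 0
    (by simpa using besselCliffordCoeff_pos hν 0)

lemma hasSum_deriv_besselClifford (ν z : ℝ) :
    HasSum (fun k : ℕ ↦ besselCliffordCoeff ν k * (k * z ^ (k - 1)))
      (besselClifford (ν + 1) z) := by
  rw [← hasSum_nat_add_iff' 1]
  simpa [besselClifford, besselCliffordCoeff_add_one, mul_assoc, mul_left_comm] using
    (summable_besselCliffordCoeff_mul_pow (ν + 1) z).hasSum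

lemma hasDerivAt_besselClifford (ν z : ℝ) :
    HasDerivAt (besselClifford ν) (besselClifford (ν + 1) z) z := by
  set R := |z| + 1
  have hz : z ∈ Set.Ioo (-R) R := abs_lt.mp (lt_add_one |z|)
  rw [← (hasSum_deriv_besselClifford ν z).tsum_eq]
  refine hasDerivAt_tsum_of_isPreconnected (hasSum_deriv_besselClifford ν R).summable.norm
    isOpen_Ioo isPreconnected_Ioo (fun k y _ ↦ (hasDerivAt_pow k y).const_mul _)
    (fun k y hy ↦ ?_) hz (summable_besselCliffordCoeff_mul_pow ν z) hz
  have hyR : |y| ≤ |R| := (abs_lt.mpr hy).le.trans (le_abs_self R)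
  simp only [norm_mul, norm_pow, norm_eq_abs]
  gcongr

lemma continuous_besselClifford (ν : ℝ) : Continuous (besselClifford ν) :=
  continuous_iff_continuousAt.mpr fun z ↦ (hasDerivAt_besselClifford ν z).continuousAt

lemma besselClifford_eq_add (ν z : ℝ) :
    besselClifford ν z = (ν + 1) * besselClifford (ν + 1) z + z * besselClifford (ν + 2) z := by
  have hsum := (summable_besselCliffordCoeff_mul_pow (ν + 1) z).hasSum
  have hderiv := (hasSum_deriv_besselClifford (ν + 1) z).mul_left z
  rw [show ν + 1 + 1 = ν + 2 by ring] at hderiv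
  refine .trans (tsum_congr fun k ↦ ?_) ((hsum.mul_left (ν + 1)).add hderiv).tsum_eq
  rw [← add_mul_besselCliffordCoeff_add_one]
  cases k with
  | zero => simp
  | succ k => push_cast; ring

end BesselClifford

section BesselI

variable {ν x : ℝ}

lemma besselI_eq_rpow_mul_besselClifford (ν : ℝ) (hx : 0 < x) :
    besselI ν x = (x / 2) ^ ν * besselClifford ν ((x / 2) ^ 2) := by
  rw [besselI, besselClifford, ← tsum_mul_left]
  refine tsum_congr fun k ↦ ?_
  rw [rpow_add (half_pos hx), show 2 * (k : ℝ) = ((2 * k : ℕ) : ℝ) by push_cast; ring,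
    rpow_natCast, pow_mul, besselCliffordCoeff, div_eq_mul_inv]
  ring

lemma besselI_pos (hν : -1 < ν) (hx : 0 < x) : 0 < besselI ν x := by
  rw [besselI_eq_rpow_mul_besselClifford ν hx]
  exact mul_pos (rpow_pos_of_pos (half_pos hx) ν) (besselClifford_pos hν (sq_nonneg _))

lemma besselI_eq_add (ν : ℝ) (hx : 0 < x) :
    besselI ν x = besselI (ν + 2) x + 2 * (ν + 1) / x * besselI (ν + 1) x := by
  have h2 := half_pos hx
  rw [besselI_eq_rpow_mul_besselClifford _ hx, besselI_eq_rpow_mul_besselClifford _ hx,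
    besselI_eq_rpow_mul_besselClifford _ hx, besselClifford_eq_add, rpow_add h2, rpow_add h2,
    rpow_one, rpow_two]
  field_simp
  ring

lemma hasDerivAt_besselI (ν : ℝ) (hx : 0 < x) :
    HasDerivAt (besselI ν) (besselI (ν + 1) x + ν / x * besselI ν x) x := by
  have h2 := half_pos hx
  have hhalf : HasDerivAt (fun y : ℝ ↦ y / 2) (1 / 2) x := (hasDerivAt_id x).div_const 2
  have hprod := (hhalf.rpow_const (p := ν) (.inl h2.ne')).mul
    ((hasDerivAt_besselClifford ν ((x / 2) ^ 2)).comp x (hhalf.pow 2))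
  refine (hprod.congr_of_eventuallyEq ?_).congr_deriv ?_
  · filter_upwards [Ioi_mem_nhds hx] with y hy using besselI_eq_rpow_mul_besselClifford ν hy
  · rw [besselI_eq_rpow_mul_besselClifford _ hx, besselI_eq_rpow_mul_besselClifford _ hx,
      rpow_add h2, rpow_sub_one h2.ne', rpow_one]
    simp only [Function.comp_apply, Pi.pow_apply]
    field_simp
    ring

lemma hasDerivAt_besselI_add_one (ν : ℝ) (hx : 0 < x) :
    HasDerivAt (besselI (ν + 1)) (besselI ν x - (ν + 1) / x * besselI (ν + 1) x) x := by
  refine (hasDerivAt_besselI (ν + 1) hx).congr_deriv ?_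
  rw [besselI_eq_add ν hx, show ν + 1 + 1 = ν + 2 by ring]
  ring

lemma rpow_mul_besselI_eq (a ν : ℝ) (hx : 0 < x) :
    x ^ a * besselI ν x = 2 ^ (-ν) * x ^ (a + ν) * besselClifford ν ((x / 2) ^ 2) := by
  rw [besselI_eq_rpow_mul_besselClifford ν hx, div_rpow hx.le zero_le_two, rpow_add hx,
    rpow_neg zero_le_two]
  field_simp

lemma continuousOn_rpow_mul_besselI {a : ℝ} (ha : a ≠ 0) (hν : 0 < a + ν) :
    ContinuousOn (fun t ↦ t ^ a * besselI ν t) (Set.Ici 0) := by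
  have hC := continuous_besselClifford ν
  have hpow := continuous_id.rpow_const (p := a + ν) fun _ ↦ .inr hν.le
  have hcont : Continuous fun t : ℝ ↦ 2 ^ (-ν) * t ^ (a + ν) * besselClifford ν ((t / 2) ^ 2) := by
    fun_prop
  refine hcont.continuousOn.congr fun t ht ↦ ?_
  rcases (Set.mem_Ici.mp ht).eq_or_lt with rfl | ht
  · simp [zero_rpow ha, zero_rpow hν.ne']
  · exact rpow_mul_besselI_eq a ν ht

lemma intervalIntegrable_mul_rpow_mul_besselI {f : ℝ → ℝ} (hf : Continuous f)
    (hν : -(1 / 2) < ν) (hx : 0 ≤ x) :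
    IntervalIntegrable (fun t ↦ f t * t ^ ν * besselI ν t) volume 0 x := by
  have hC := continuous_besselClifford ν
  have hint : IntervalIntegrable
      (fun t ↦ 2 ^ (-ν) * f t * besselClifford ν ((t / 2) ^ 2) * t ^ (ν + ν)) volume 0 x :=
    (intervalIntegral.intervalIntegrable_rpow' (by linarith)).continuousOn_mul (by fun_prop)
  refine hint.congr fun t ht ↦ ?_
  rw [Set.uIoc_of_le hx] at ht
  linear_combination -f t * rpow_mul_besselI_eq ν ν ht.1

end BesselI

section BesselK

open Filter Topology

variable {μ x : ℝ}

lemma integral_exp_neg_mul_exp_add {r a : ℝ} (hr : 0 < r) (ha : 0 < a) :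
    ∫ t, exp (-(r * exp t) + a * t) = (1 / r) ^ a * Gamma a := by
  have hsubst := integral_image_eq_integral_abs_deriv_smul (s := Set.univ) MeasurableSet.univ
    (fun t _ ↦ (hasDerivAt_exp t).hasDerivWithinAt) exp_injective.injOn
    (fun u : ℝ ↦ u ^ (a - 1) * exp (-(r * u)))
  rw [Set.image_univ, range_exp, setIntegral_univ, integral_rpow_mul_exp_neg_mul_Ioi ha hr]
    at hsubst
  rw [hsubst]
  refine integral_congr_ae (.of_forall fun t ↦ ?_)
  simp only [smul_eq_mul]
  rw [abs_of_pos (exp_pos t), ← exp_mul, ← exp_add, ← exp_add]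
  ring_nf

lemma integrable_exp_neg_mul_exp_add {r a : ℝ} (hr : 0 < r) (ha : 0 < a) :
    Integrable fun t ↦ exp (-(r * exp t) + a * t) := by
  refine .of_integral_ne_zero ?_
  rw [integral_exp_neg_mul_exp_add hr ha]
  have := Gamma_pos_of_pos ha
  positivity

/-- The integrand in `K_μ(x) = (1 / 2) ∫_ℝ exp(μ t - x cosh t) dt`, the form of the integral
representation in which shifting `μ` by `±1` multiplies the integrand by `exp (±t)`. -/
noncomputable def besselKernel (μ x t : ℝ) : ℝ :=
  exp (μ * t - x * cosh t)

lemma besselKernel_add_one (μ x t : ℝ) :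
    besselKernel (μ + 1) x t = besselKernel μ x t * exp t := by
  rw [besselKernel, besselKernel, ← exp_add]
  ring_nf

lemma besselKernel_sub_one (μ x t : ℝ) :
    besselKernel (μ - 1) x t = besselKernel μ x t * exp (-t) := by
  rw [besselKernel, besselKernel, ← exp_add]
  ring_nf

lemma besselKernel_pos (μ x t : ℝ) : 0 < besselKernel μ x t :=
  exp_pos _

lemma continuous_besselKernel (μ x : ℝ) : Continuous (besselKernel μ x) := by
  unfold besselKernel
  fun_prop

lemma integrable_besselKernel (μ : ℝ) (hx : 0 < x) : Integrable (besselKernel μ x) := by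
  have hf := integrable_exp_neg_mul_exp_add (half_pos hx) (by positivity : 0 < |μ| + 1)
  refine (hf.add hf.comp_neg).mono' (continuous_besselKernel μ x).aestronglyMeasurable
    (.of_forall fun t ↦ ?_)
  have hcosh : exp |t| / 2 ≤ cosh t := by
    rw [← cosh_abs, cosh_eq]
    linarith [exp_pos (-|t|)]
  have habs : besselKernel μ x t ≤ exp (-(x / 2 * exp |t|) + (|μ| + 1) * |t|) := by
    refine exp_le_exp.mpr ?_
    have := (le_abs_self (μ * t)).trans_eq (abs_mul μ t)
    nlinarith [abs_nonneg t]
  rw [norm_of_nonneg (besselKernel_pos μ x t).le]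
  rcases abs_choice t with h | h <;> rw [h] at habs
  · exact habs.trans (le_add_of_nonneg_right (exp_pos _).le)
  · exact habs.trans (le_add_of_nonneg_left (exp_pos _).le)

lemma besselK_eq_integral_besselKernel (μ : ℝ) (hx : 0 < x) :
    besselK μ x = 1 / 2 * ∫ t, besselKernel μ x t := by
  have heven : ∫ t, exp (-x * cosh t) * cosh (μ * t) = 2 * besselK μ x := by
    rw [besselK, ← integral_comp_abs (f := fun t ↦ exp (-x * cosh t) * cosh (μ * t))]
    refine integral_congr_ae (.of_forall fun t ↦ ?_)
    simp only [cosh_abs]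
    rw [← cosh_abs (μ * t), ← cosh_abs (μ * |t|), abs_mul, abs_mul, abs_abs]
  have hcosh (t : ℝ) : exp (-x * cosh t) * cosh (μ * t) =
      1 / 2 * (besselKernel μ x t + besselKernel μ x (-t)) := by
    rw [cosh_eq (μ * t), besselKernel, besselKernel, cosh_neg, sub_eq_neg_add, sub_eq_neg_add,
      exp_add, exp_add]
    ring_nf
  have hint := integrable_besselKernel μ hx
  simp_rw [hcosh] at heven
  rw [integral_const_mul, integral_add hint hint.comp_neg, integral_neg_eq_self] at heven
  linarith

lemma besselK_nonneg (μ x : ℝ) : 0 ≤ besselK μ x :=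
  integral_nonneg fun _ ↦ mul_nonneg (exp_pos _).le (cosh_pos _).le

lemma hasDerivAt_besselKernel_right (μ x t : ℝ) :
    HasDerivAt (besselKernel μ x) (μ * besselKernel μ x t -
      x / 2 * (besselKernel (μ + 1) x t - besselKernel (μ - 1) x t)) t := by
  refine (((hasDerivAt_id t).const_mul μ).sub
    ((hasDerivAt_cosh t).const_mul x)).exp.congr_deriv ?_
  rw [besselKernel_add_one, besselKernel_sub_one, sinh_eq]
  simp only [besselKernel, id, Pi.sub_apply]
  ring

lemma mul_besselK_add_one_sub_besselK_sub_one (μ : ℝ) (hx : 0 < x) :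
    x * (besselK (μ + 1) x - besselK (μ - 1) x) = 2 * μ * besselK μ x := by
  have h0 := integrable_besselKernel μ hx
  have h1 := integrable_besselKernel (μ + 1) hx
  have h2 := integrable_besselKernel (μ - 1) hx
  have h12 : Integrable fun t ↦ besselKernel (μ + 1) x t - besselKernel (μ - 1) x t := h1.sub h2
  have hzero := integral_eq_zero_of_hasDerivAt_of_integrable (hasDerivAt_besselKernel_right μ x)
    ((h0.const_mul μ).sub (h12.const_mul (x / 2))) h0
  rw [integral_sub (h0.const_mul μ) (h12.const_mul (x / 2)), integral_const_mul,
    integral_const_mul, integral_sub h1 h2] at hzero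
  simp only [besselK_eq_integral_besselKernel _ hx]
  linarith

lemma cosh_mul_besselKernel (μ x t : ℝ) :
    cosh t * besselKernel μ x t =
      1 / 2 * (besselKernel (μ + 1) x t + besselKernel (μ - 1) x t) := by
  rw [besselKernel_add_one, besselKernel_sub_one, cosh_eq]
  ring

lemma besselKernel_le_of_le {y : ℝ} (hxy : x ≤ y) (μ t : ℝ) :
    besselKernel μ y t ≤ besselKernel μ x t := by
  have := (cosh_pos t).le
  unfold besselKernel
  gcongr

lemma hasDerivAt_besselKernel_middle (μ x t : ℝ) :
    HasDerivAt (fun y ↦ besselKernel μ y t) (-(cosh t * besselKernel μ x t)) x := by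
  refine ((((hasDerivAt_id x).mul_const (cosh t)).const_sub (μ * t)).exp).congr_deriv ?_
  simp only [besselKernel, id]
  ring

lemma hasDerivAt_besselK (μ : ℝ) (hx : 0 < x) :
    HasDerivAt (besselK μ) (-(besselK (μ + 1) x + besselK (μ - 1) x) / 2) x := by
  have hint {y : ℝ} (hy : 0 < y) : Integrable fun t ↦ cosh t * besselKernel μ y t := by
    simp only [cosh_mul_besselKernel]
    exact ((integrable_besselKernel _ hy).add (integrable_besselKernel _ hy)).const_mul _
  have hderiv := (hasDerivAt_integral_of_dominated_loc_of_deriv_le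
    (F := besselKernel μ) (F' := fun y t ↦ -(cosh t * besselKernel μ y t))
    (bound := fun t ↦ cosh t * besselKernel μ (x / 2) t)
    (Ioi_mem_nhds (half_lt_self hx))
    (.of_forall fun y ↦ (continuous_besselKernel μ y).aestronglyMeasurable)
    (integrable_besselKernel μ hx) (hint hx).aestronglyMeasurable.neg
    (.of_forall fun t y hy ↦ ?_) (hint (half_pos hx))
    (.of_forall fun t y _ ↦ hasDerivAt_besselKernel_middle μ y t)).2.const_mul (1 / 2)
  · refine (hderiv.congr_of_eventuallyEq ?_).congr_deriv ?_
    · filter_upwards [Ioi_mem_nhds hx] with y hy using besselK_eq_integral_besselKernel μ hy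
    · simp only [integral_neg, cosh_mul_besselKernel]
      rw [integral_const_mul, integral_add (integrable_besselKernel _ hx)
        (integrable_besselKernel _ hx), besselK_eq_integral_besselKernel _ hx,
        besselK_eq_integral_besselKernel _ hx]
      ring
  · have := besselKernel_le_of_le (Set.mem_Ioi.mp hy).le μ t
    have := (cosh_pos t).le
    rw [norm_neg, norm_of_nonneg (mul_nonneg this (besselKernel_pos μ y t).le)]
    gcongr

lemma hasDerivAt_besselK_eq_sub_besselK_add_one (μ : ℝ) (hx : 0 < x) :
    HasDerivAt (besselK μ) (μ / x * besselK μ x - besselK (μ + 1) x) x := by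
  refine (hasDerivAt_besselK μ hx).congr_deriv ?_
  have := mul_besselK_add_one_sub_besselK_sub_one μ hx
  field_simp
  linarith

lemma hasDerivAt_besselK_add_one (μ : ℝ) (hx : 0 < x) :
    HasDerivAt (besselK (μ + 1)) (-besselK μ x - (μ + 1) / x * besselK (μ + 1) x) x := by
  refine (hasDerivAt_besselK (μ + 1) hx).congr_deriv ?_
  have := mul_besselK_add_one_sub_besselK_sub_one (μ + 1) hx
  rw [add_sub_cancel_right] at this ⊢
  field_simp
  linarith

lemma rpow_mul_besselK_eq_integral (μ : ℝ) (hx : 0 < x) :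
    x ^ μ * besselK μ x =
      1 / 2 * ∫ t, exp (-(1 / 2 * (exp t + x ^ 2 * exp (-t))) + μ * t) := by
  rw [besselK_eq_integral_besselKernel μ hx,
    ← integral_sub_right_eq_self (besselKernel μ x) (log x), mul_left_comm, ← integral_const_mul]
  congr 2 with t
  rw [besselKernel, rpow_def_of_pos hx, ← exp_add, cosh_eq, neg_sub, exp_sub, exp_sub,
    exp_log hx, exp_neg]
  congr 1
  field_simp
  ring

lemma tendsto_rpow_mul_besselK_zero (hμ : 0 < μ) :
    Tendsto (fun x ↦ x ^ μ * besselK μ x) (𝓝[>] 0) (𝓝 (2 ^ (μ - 1) * Gamma μ)) := by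
  have hlim : 2 ^ (μ - 1) * Gamma μ = 1 / 2 * ∫ t, exp (-(1 / 2 * exp t) + μ * t) := by
    rw [integral_exp_neg_mul_exp_add one_half_pos hμ, rpow_sub_one two_ne_zero, one_div_one_div]
    ring
  rw [hlim]
  refine Tendsto.congr' (eventually_mem_nhdsWithin.mono fun x hx ↦
    (rpow_mul_besselK_eq_integral μ hx).symm) (Tendsto.const_mul _ ?_)
  refine tendsto_integral_filter_of_dominated_convergence
    (fun t ↦ exp (-(1 / 2 * exp t) + μ * t)) (.of_forall fun x ↦ ?_) (.of_forall fun x ↦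
    .of_forall fun t ↦ ?_) (integrable_exp_neg_mul_exp_add one_half_pos hμ) (.of_forall fun t ↦ ?_)
  · exact (by fun_prop : Continuous _).aestronglyMeasurable
  · rw [norm_of_nonneg (exp_pos _).le]
    have : 0 ≤ x ^ 2 * exp (-t) := by positivity
    gcongr
    linarith
  · refine tendsto_nhdsWithin_of_tendsto_nhds (Continuous.tendsto' ?_ _ _ (by simp))
    fun_prop

end BesselK

section KeyInequality

variable {ν x : ℝ}

-- The factor `exp t * t ^ (1 / 2)` cancels every term of the derivative except a multiple of
-- `I_{ν+1}`.
lemma hasDerivAt_exp_mul_besselI_sub (ν : ℝ) (hx : 0 < x) :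
    HasDerivAt (fun t ↦ exp t * (t ^ (1 / 2 : ℝ) * besselI ν t -
        (t ^ (1 / 2 : ℝ) * besselI (ν + 1) t +
          (ν + 1 / 2) * (t ^ (-(1 / 2) : ℝ) * besselI (ν + 1) t))))
      (exp x * x ^ (-(3 / 2) : ℝ) * ((ν + 1 / 2) * (ν + 3 / 2) * besselI (ν + 1) x)) x := by
  have hI := hasDerivAt_besselI ν hx
  have hI1 := hasDerivAt_besselI_add_one ν hx
  have hpow (a : ℝ) := hasDerivAt_rpow_const (x := x) (p := a) (.inl hx.ne')
  refine ((hasDerivAt_exp x).mul (((hpow (1 / 2)).mul hI).sub (((hpow (1 / 2)).mul hI1).add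
    (((hpow (-(1 / 2))).mul hI1).const_mul (ν + 1 / 2))))).congr_deriv ?_
  have h1 : x ^ (1 / 2 : ℝ) = x ^ (-(3 / 2) : ℝ) * x ^ 2 := by
    rw [← rpow_natCast x 2, ← rpow_add hx]; norm_num
  have h2 : x ^ (-(1 / 2) : ℝ) = x ^ (-(3 / 2) : ℝ) * x := by
    rw [← rpow_add_one hx.ne']; norm_num
  simp only [Pi.add_apply, Pi.sub_apply, Pi.mul_apply]
  rw [show (1 / 2 - 1 : ℝ) = -(1 / 2) by norm_num, show (-(1 / 2) - 1 : ℝ) = -(3 / 2) by norm_num,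
    h1, h2]
  field_simp
  ring

lemma add_mul_besselI_add_one_le (hν : -(1 / 2) < ν) (hx : 0 < x) :
    (x + (ν + 1 / 2)) * besselI (ν + 1) x ≤ x * besselI ν x := by
  set G : ℝ → ℝ := fun t ↦ exp t * (t ^ (1 / 2 : ℝ) * besselI ν t -
    (t ^ (1 / 2 : ℝ) * besselI (ν + 1) t +
      (ν + 1 / 2) * (t ^ (-(1 / 2) : ℝ) * besselI (ν + 1) t))) with hG
  have hcont : ContinuousOn G (Set.Ici 0) :=
    continuous_exp.continuousOn.mul
      ((continuousOn_rpow_mul_besselI (by norm_num) (by linarith)).sub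
        ((continuousOn_rpow_mul_besselI (by norm_num) (by linarith)).add
          ((continuousOn_rpow_mul_besselI (by norm_num) (by linarith)).const_smul (ν + 1 / 2))))
  have hmono : MonotoneOn G (Set.Ici 0) := by
    refine monotoneOn_of_hasDerivWithinAt_nonneg (convex_Ici 0) hcont
      (fun t ht ↦ (hasDerivAt_exp_mul_besselI_sub ν ?_).hasDerivWithinAt) fun t ht ↦ ?_
    all_goals rw [interior_Ici, Set.mem_Ioi] at ht
    · exact ht
    · have := besselI_pos (by linarith : -1 < ν + 1) ht
      have : 0 < ν + 1 / 2 := by linarith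
      have : 0 < ν + 3 / 2 := by linarith
      positivity
  have hG0 : G 0 = 0 := by simp [hG, zero_rpow]
  have hGx : G x = exp x * x ^ (-(1 / 2) : ℝ) *
      (x * besselI ν x - (x + (ν + 1 / 2)) * besselI (ν + 1) x) := by
    have : x ^ (1 / 2 : ℝ) = x ^ (-(1 / 2) : ℝ) * x := by
      rw [← rpow_add_one hx.ne']; norm_num
    rw [hG]
    simp only [this]
    ring
  have hle := hmono Set.self_mem_Ici (Set.mem_Ici.mpr hx.le) hx.le
  rw [hG0, hGx] at hle
  exact sub_nonneg.mp (nonneg_of_mul_nonneg_right hle (by positivity))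

lemma besselI_add_one_le (hν : -(1 / 2) < ν) (hx : 0 < x) : besselI (ν + 1) x ≤ besselI ν x := by
  have := add_mul_besselI_add_one_le hν hx
  have : 0 ≤ (ν + 1 / 2) * besselI (ν + 1) x :=
    mul_nonneg (by linarith) (besselI_pos (by linarith) hx).le
  exact le_of_mul_le_mul_left (by linarith) hx

lemma two_mul_add_one_mul_besselI_add_one_le (hν : -3 < ν) (hx : 0 < x) :
    2 * (ν + 1) * besselI (ν + 1) x ≤ x * besselI ν x := by
  calc 2 * (ν + 1) * besselI (ν + 1) x
      ≤ x * besselI (ν + 2) x + 2 * (ν + 1) * besselI (ν + 1) x :=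
        le_add_of_nonneg_left (mul_pos hx (besselI_pos (by linarith) hx)).le
    _ = x * besselI ν x := by
        rw [besselI_eq_add ν hx]
        field_simp

end KeyInequality

section Wronskian

open Filter Topology

variable {ν x : ℝ}

lemma hasDerivAt_wronskian_besselI_besselK (ν : ℝ) (hx : 0 < x) :
    HasDerivAt (fun t ↦ t * (besselI ν t * besselK (ν + 1) t + besselI (ν + 1) t * besselK ν t))
      0 x := by
  have hIK := (hasDerivAt_besselI ν hx).mul (hasDerivAt_besselK_add_one ν hx)
  have hIK' := (hasDerivAt_besselI_add_one ν hx).mul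
    (hasDerivAt_besselK_eq_sub_besselK_add_one ν hx)
  refine ((hasDerivAt_id x).mul (hIK.add hIK')).congr_deriv ?_
  simp only [id, Pi.add_apply, Pi.mul_apply]
  field_simp
  ring

lemma tendsto_rpow_add_two_mul_besselK_zero (hν : -1 < ν) :
    Tendsto (fun t ↦ t ^ (ν + 2) * besselK ν t) (𝓝[>] 0) (𝓝 0) := by
  have hlim := (tendsto_rpow_mul_besselK_zero (by linarith : 0 < ν + 2)).sub
    ((tendsto_rpow_mul_besselK_zero (by linarith : 0 < ν + 1)).const_mul (2 * (ν + 1)))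
  have hcancel : 2 ^ (ν + 2 - 1) * Gamma (ν + 2) -
      2 * (ν + 1) * (2 ^ (ν + 1 - 1) * Gamma (ν + 1)) = 0 := by
    rw [show ν + 2 = ν + 1 + 1 by ring, Gamma_add_one (by linarith), add_sub_cancel_right,
      add_sub_cancel_right, rpow_add_one two_ne_zero]
    ring
  rw [hcancel] at hlim
  refine hlim.congr' (eventually_mem_nhdsWithin.mono fun t ht ↦ ?_)
  have hrec := mul_besselK_add_one_sub_besselK_sub_one (ν + 1) (Set.mem_Ioi.mp ht)
  rw [show ν + 1 + 1 = ν + 2 by ring, add_sub_cancel_right] at hrec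
  have hpow : t ^ (ν + 2) = t ^ (ν + 1) * t := by
    rw [← rpow_add_one (ne_of_gt ht), show ν + 1 + 1 = ν + 2 by ring]
  simp only [hpow]
  linear_combination t ^ (ν + 1) * hrec

lemma tendsto_wronskian_besselI_besselK_zero (hν : -1 < ν) :
    Tendsto (fun t ↦ t * (besselI ν t * besselK (ν + 1) t + besselI (ν + 1) t * besselK ν t))
      (𝓝[>] 0) (𝓝 1) := by
  have hC (μ : ℝ) : Tendsto (fun t : ℝ ↦ besselClifford μ ((t / 2) ^ 2)) (𝓝[>] 0)
      (𝓝 (Gamma (μ + 1))⁻¹) := by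
    have := continuous_besselClifford μ
    refine tendsto_nhdsWithin_of_tendsto_nhds (Continuous.tendsto' (by fun_prop) _ _ ?_)
    simp [besselClifford_zero]
  have hK := tendsto_rpow_mul_besselK_zero (by linarith : 0 < ν + 1)
  rw [add_sub_cancel_right] at hK
  have hlim := (((hC ν).mul hK).const_mul (2 ^ (-ν))).add
    (((hC (ν + 1)).mul (tendsto_rpow_add_two_mul_besselK_zero hν)).const_mul (2 ^ (-(ν + 1))))
  have hone : (2 : ℝ) ^ (-ν) * ((Gamma (ν + 1))⁻¹ * (2 ^ ν * Gamma (ν + 1))) +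
      2 ^ (-(ν + 1)) * ((Gamma (ν + 1 + 1))⁻¹ * 0) = 1 := by
    have := Gamma_pos_of_pos (by linarith : 0 < ν + 1)
    rw [rpow_neg zero_le_two]
    field_simp
    ring
  rw [hone] at hlim
  refine hlim.congr' (eventually_mem_nhdsWithin.mono fun t ht ↦ ?_)
  rw [Set.mem_Ioi] at ht
  beta_reduce
  rw [besselI_eq_rpow_mul_besselClifford ν ht, besselI_eq_rpow_mul_besselClifford (ν + 1) ht,
    div_rpow ht.le zero_le_two, div_rpow ht.le zero_le_two, show ν + 2 = ν + 1 + 1 by ring,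
    rpow_add_one ht.ne' (ν + 1), rpow_add_one ht.ne', rpow_neg zero_le_two, rpow_neg zero_le_two]
  ring

lemma mul_besselI_mul_besselK_add_eq_one (hν : -1 < ν) (hx : 0 < x) :
    x * (besselI ν x * besselK (ν + 1) x + besselI (ν + 1) x * besselK ν x) = 1 := by
  obtain ⟨c, hc⟩ := isOpen_Ioi.exists_is_const_of_deriv_eq_zero isPreconnected_Ioi
    (fun t ht ↦ (hasDerivAt_wronskian_besselI_besselK ν ht).differentiableAt.differentiableWithinAt)
    fun t ht ↦ (hasDerivAt_wronskian_besselI_besselK ν ht).deriv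
  have hc1 : c = 1 := tendsto_nhds_unique
    (tendsto_const_nhds.congr' (eventually_mem_nhdsWithin.mono fun t ht ↦ (hc t ht).symm))
    (tendsto_wronskian_besselI_besselK_zero hν)
  exact (hc x hx).trans hc1

lemma mul_besselI_mul_besselK_add_one_le_one (hν : -1 < ν) (hx : 0 < x) :
    x * besselI ν x * besselK (ν + 1) x ≤ 1 := by
  have := mul_besselI_mul_besselK_add_eq_one hν hx
  have := mul_nonneg hx.le (mul_nonneg (besselI_pos (by linarith : -1 < ν + 1) hx).le
    (besselK_nonneg ν x))
  linarith

lemma hasDerivAt_mul_besselI_add_one_mul_besselK_add_one (hν : -1 < ν) (hx : 0 < x) :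
    HasDerivAt (fun t ↦ t * besselI (ν + 1) t * besselK (ν + 1) t)
      (besselK (ν + 1) x * (2 * x * besselI ν x - (2 * ν + 1) * besselI (ν + 1) x) - 1) x := by
  refine (((hasDerivAt_id x).mul (hasDerivAt_besselI_add_one ν hx)).mul
    (hasDerivAt_besselK_add_one ν hx)).congr_deriv ?_
  have hW := mul_besselI_mul_besselK_add_eq_one hν hx
  simp only [id, Pi.mul_apply]
  field_simp
  linear_combination -hW

lemma monotoneOn_exp_mul_mul_besselI_add_one_mul_besselK_add_one_sub_half (hν : -(1 / 2) < ν) :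
    MonotoneOn (fun t ↦ exp (-2 * t) * (t * besselI (ν + 1) t * besselK (ν + 1) t - 1 / 2))
      (Set.Ioi 0) := by
  have hderiv {t : ℝ} (ht : 0 < t) :
      HasDerivAt (fun t ↦ exp (-2 * t) * (t * besselI (ν + 1) t * besselK (ν + 1) t - 1 / 2))
        (exp (-2 * t) * (2 * besselK (ν + 1) t *
          (t * besselI ν t - (t + (ν + 1 / 2)) * besselI (ν + 1) t))) t := by
    refine (((hasDerivAt_id t).const_mul (-2)).exp.mul
      ((hasDerivAt_mul_besselI_add_one_mul_besselK_add_one (by linarith) ht).sub_const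
        (1 / 2))).congr_deriv ?_
    simp only [id]
    ring
  refine monotoneOn_of_hasDerivWithinAt_nonneg (convex_Ioi 0)
    (fun t ht ↦ (hderiv ht).continuousAt.continuousWithinAt)
    (fun t ht ↦ (hderiv (interior_subset ht)).hasDerivWithinAt) fun t ht ↦ ?_
  have hgap := sub_nonneg.mpr (add_mul_besselI_add_one_le hν (interior_subset ht : 0 < t))
  have hK := besselK_nonneg (ν + 1) t
  positivity

-- If the product exceeded `1 / 2` somewhere, monotonicity would force it to grow exponentially,
-- but it is at most `1`.
lemma mul_besselI_add_one_mul_besselK_add_one_le_half (hν : -(1 / 2) < ν) (hx : 0 < x) :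
    x * besselI (ν + 1) x * besselK (ν + 1) x ≤ 1 / 2 := by
  have hle_one {t : ℝ} (ht : 0 < t) : t * besselI (ν + 1) t * besselK (ν + 1) t ≤ 1 := by
    refine le_trans ?_ (mul_besselI_mul_besselK_add_one_le_one (ν := ν) (by linarith) ht)
    have := besselI_add_one_le hν ht
    have := besselK_nonneg (ν + 1) t
    gcongr
  have hlim : Tendsto (fun t : ℝ ↦ exp (-2 * t)) atTop (𝓝 0) :=
    tendsto_exp_atBot.comp (tendsto_id.const_mul_atTop_of_neg (by norm_num))
  have hneg : exp (-2 * x) * (x * besselI (ν + 1) x * besselK (ν + 1) x - 1 / 2) ≤ 0 := by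
    refine ge_of_tendsto hlim ((eventually_ge_atTop x).mono fun y hy ↦ ?_)
    have hy0 := hx.trans_le hy
    exact (monotoneOn_exp_mul_mul_besselI_add_one_mul_besselK_add_one_sub_half hν hx hy0 hy).trans
      (mul_le_of_le_one_right (exp_pos _).le (by linarith [hle_one hy0]))
  exact sub_nonpos.mp (nonpos_of_mul_nonpos_right hneg (exp_pos _))

end Wronskian

section IntegralBounds

open intervalIntegral

variable {β ν x : ℝ}

-- Integration by parts: `w * (G - G b + c * (b - ·))` has derivative at least `w * (g - c)`, is
-- nonnegative at `a` and vanishes at `b`.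
lemma integral_mul_le_mul_integral_of_sub_le_mul_sub {a b c : ℝ} {w w' g G : ℝ → ℝ} (hab : a ≤ b)
    (hw : ContinuousOn w (Set.Icc a b)) (hwa : 0 ≤ w a)
    (hw' : ∀ t ∈ Set.Ioo a b, HasDerivAt w (w' t) t) (hw'_nonneg : ∀ t ∈ Set.Ioo a b, 0 ≤ w' t)
    (hG : ContinuousOn G (Set.Icc a b)) (hG' : ∀ t ∈ Set.Ioo a b, HasDerivAt G (g t) t)
    (hwg : IntervalIntegrable (fun t ↦ w t * g t) volume a b)
    (hslope : ∀ t ∈ Set.Icc a b, G b - G t ≤ c * (b - t)) :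
    ∫ t in a..b, w t * g t ≤ c * ∫ t in a..b, w t := by
  have hcw : IntervalIntegrable (fun t ↦ c * w t) volume a b :=
    (hw.intervalIntegrable_of_Icc hab).const_mul c
  have hderiv (t : ℝ) (ht : t ∈ Set.Ioo a b) :
      HasDerivAt (fun t ↦ w t * (G t - G b + c * (b - t)))
        (w' t * (G t - G b + c * (b - t)) + w t * (g t - c)) t := by
    refine ((hw' t ht).mul (((hG' t ht).sub_const (G b)).add
      (((hasDerivAt_id t).const_sub b).const_mul c))).congr_deriv ?_
    simp only [Pi.add_apply, id]
    ring
  have hcont : ContinuousOn (fun t ↦ w t * (G t - G b + c * (b - t))) (Set.Icc a b) := by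
    fun_prop
  have hle := integral_le_sub_of_hasDeriv_right_of_le hab hcont
    (fun t ht ↦ (hderiv t ht).hasDerivWithinAt)
    ((intervalIntegrable_iff_integrableOn_Icc_of_le hab).mp (hwg.sub hcw)) fun t ht ↦ by
      have := mul_nonneg (hw'_nonneg t ht)
        (by linarith [hslope t (Set.Ioo_subset_Icc_self ht)] : 0 ≤ G t - G b + c * (b - t))
      linarith
  have ha := mul_nonneg hwa
    (by linarith [hslope a (Set.left_mem_Icc.mpr hab)] : 0 ≤ G a - G b + c * (b - a))
  rw [integral_sub hwg hcw, intervalIntegral.integral_const_mul] at hle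
  linarith

lemma integral_exp_mul_le {c : ℝ} (hc : 0 < c) (x : ℝ) :
    ∫ t in (0 : ℝ)..x, exp (c * t) ≤ exp (c * x) / c := by
  rw [integral_comp_mul_left (fun t ↦ exp t) hc.ne', integral_exp, mul_zero, exp_zero, smul_eq_mul,
    inv_mul_eq_div]
  gcongr
  linarith

/-- The primitive of `e^{-t} t ^ ν I_ν(t)` that vanishes at `0`, in closed form (hence not for
`ν = -1 / 2`, where the division yields `0`). It reduces the integral of `e^{β t} t ^ ν I_ν(t)` to
one with the weight `e^{(1 + β) t}`. -/
noncomputable def besselIPrimitive (ν t : ℝ) : ℝ :=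
  exp (-t) * (t ^ (ν + 1) * besselI ν t + t ^ (ν + 1) * besselI (ν + 1) t) / (2 * ν + 1)

lemma hasDerivAt_besselIPrimitive (hν : 2 * ν + 1 ≠ 0) (hx : 0 < x) :
    HasDerivAt (besselIPrimitive ν) (exp (-x) * (x ^ ν * besselI ν x)) x := by
  have hpow := hasDerivAt_rpow_const (x := x) (p := ν + 1) (.inl hx.ne')
  refine ((((hasDerivAt_id x).neg.exp).mul ((hpow.mul (hasDerivAt_besselI ν hx)).add
    (hpow.mul (hasDerivAt_besselI_add_one ν hx)))).div_const (2 * ν + 1)).congr_deriv ?_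
  simp only [id, Pi.add_apply, Pi.mul_apply, Pi.neg_apply, add_sub_cancel_right,
    rpow_add_one hx.ne']
  rw [div_eq_iff hν]
  field_simp
  ring

lemma continuousOn_besselIPrimitive (hν : -(1 / 2) < ν) :
    ContinuousOn (besselIPrimitive ν) (Set.Ici 0) :=
  ((continuous_exp.comp continuous_neg).continuousOn.mul
    ((continuousOn_rpow_mul_besselI (by linarith) (by linarith)).add
      (continuousOn_rpow_mul_besselI (by linarith) (by linarith)))).div_const _

lemma besselIPrimitive_zero (hν : ν ≠ -1) : besselIPrimitive ν 0 = 0 := by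
  simp [besselIPrimitive, zero_rpow (fun h ↦ hν (eq_neg_of_add_eq_zero_left h) : ν + 1 ≠ 0)]

lemma besselIPrimitive_nonneg (hν : -(1 / 2) < ν) (hx : 0 < x) : 0 ≤ besselIPrimitive ν x := by
  have := besselI_pos (by linarith : -1 < ν) hx
  have := besselI_pos (by linarith : -1 < ν + 1) hx
  have : 0 < 2 * ν + 1 := by linarith
  unfold besselIPrimitive
  positivity

lemma antitoneOn_besselIPrimitive_div_rpow (hν : -(1 / 2) < ν) :
    AntitoneOn (fun t ↦ besselIPrimitive ν t / t ^ (2 * ν + 1)) (Set.Ioi 0) := by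
  have hderiv {t : ℝ} (ht : 0 < t) :
      HasDerivAt (fun t ↦ besselIPrimitive ν t / t ^ (2 * ν + 1))
        (-(exp (-t) * t ^ ν * besselI (ν + 1) t / t ^ (2 * ν + 1))) t := by
    have hν' : 2 * ν + 1 ≠ 0 := by linarith
    have hpow := hasDerivAt_rpow_const (x := t) (p := 2 * ν + 1) (.inl ht.ne')
    refine ((hasDerivAt_besselIPrimitive hν' ht).div hpow (rpow_pos_of_pos ht _).ne').congr_deriv ?_
    rw [besselIPrimitive, rpow_sub_one ht.ne', rpow_add_one ht.ne' ν]
    field_simp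
    ring
  refine antitoneOn_of_hasDerivWithinAt_nonpos (convex_Ioi 0)
    (fun t ht ↦ (hderiv ht).continuousAt.continuousWithinAt)
    (fun t ht ↦ (hderiv (interior_subset ht)).hasDerivWithinAt) fun t ht ↦ ?_
  have ht : 0 < t := interior_subset ht
  have := besselI_pos (by linarith : -1 < ν + 1) ht
  exact neg_nonpos.mpr (by positivity)

lemma div_rpow_mul_besselIPrimitive_le {t : ℝ} (hν : -(1 / 2) < ν) (ht : 0 ≤ t) (hx : 0 < x)
    (htx : t ≤ x) : (t / x) ^ (2 * ν + 1) * besselIPrimitive ν x ≤ besselIPrimitive ν t := by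
  rcases ht.eq_or_lt with rfl | ht
  · rw [besselIPrimitive_zero (by linarith), zero_div, zero_rpow (by linarith), zero_mul]
  · have hanti := antitoneOn_besselIPrimitive_div_rpow hν ht hx htx
    rw [le_div_iff₀ (rpow_pos_of_pos ht _)] at hanti
    rw [div_rpow ht.le hx.le]
    linarith [div_mul_comm (t ^ (2 * ν + 1)) (x ^ (2 * ν + 1)) (besselIPrimitive ν x)]

lemma one_sub_rpow_le_mul_one_sub {s p q : ℝ} (hs0 : 0 ≤ s) (hs1 : s ≤ 1) (hp : 0 ≤ p)
    (hpq : p ≤ q) (hq : 1 ≤ q) : 1 - s ^ p ≤ q * (1 - s) := by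
  have hbernoulli := one_add_mul_self_le_rpow_one_add (by linarith : -1 ≤ s - 1) hq
  rw [add_sub_cancel] at hbernoulli
  have := rpow_le_rpow_of_exponent_ge' hs0 hs1 hp hpq
  linarith

lemma besselIPrimitive_sub_le_mul_sub {q t : ℝ} (hν : -(1 / 2) < ν) (hq1 : 1 ≤ q)
    (hq : 2 * ν + 1 ≤ q) (hx : 0 < x) (ht : t ∈ Set.Icc 0 x) :
    besselIPrimitive ν x - besselIPrimitive ν t ≤ q * besselIPrimitive ν x / x * (x - t) := by
  have hscale := div_rpow_mul_besselIPrimitive_le hν ht.1 hx ht.2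
  have hconvex := one_sub_rpow_le_mul_one_sub (div_nonneg ht.1 hx.le) (div_le_one_of_le₀ ht.2 hx.le)
    (by linarith) hq hq1
  calc besselIPrimitive ν x - besselIPrimitive ν t
      ≤ (1 - (t / x) ^ (2 * ν + 1)) * besselIPrimitive ν x := by linarith
    _ ≤ q * (1 - t / x) * besselIPrimitive ν x :=
        mul_le_mul_of_nonneg_right hconvex (besselIPrimitive_nonneg hν hx)
    _ = q * besselIPrimitive ν x / x * (x - t) := by field_simp

lemma integral_exp_mul_rpow_mul_besselI_le_mul_add {q : ℝ} (hβ : -1 < β) (hν : -(1 / 2) < ν)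
    (hq1 : 1 ≤ q) (hq : 2 * ν + 1 ≤ q) (hx : 0 < x) :
    ∫ t in (0 : ℝ)..x, exp (β * t) * t ^ ν * besselI ν t ≤
      q / ((2 * ν + 1) * (1 + β)) *
        (exp (β * x) * x ^ ν * (besselI ν x + besselI (ν + 1) x)) := by
  have hexp (t : ℝ) : exp ((1 + β) * t) * (exp (-t) * (t ^ ν * besselI ν t)) =
      exp (β * t) * t ^ ν * besselI ν t := by
    rw [← mul_assoc, ← exp_add]
    ring_nf
  have hint := intervalIntegrable_mul_rpow_mul_besselI
    (by fun_prop : Continuous fun t ↦ exp (β * t)) hν hx.le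
  simp only [← hexp] at hint ⊢
  have hβ' : 0 < 1 + β := by linarith
  refine (integral_mul_le_mul_integral_of_sub_le_mul_sub
    (w := fun t ↦ exp ((1 + β) * t)) (w' := fun t ↦ exp ((1 + β) * t) * (1 + β)) hx.le
    (by fun_prop) (exp_pos _).le (fun t _ ↦ ?_) (fun t _ ↦ by positivity)
    ((continuousOn_besselIPrimitive hν).mono Set.Icc_subset_Ici_self)
    (fun t ht ↦ hasDerivAt_besselIPrimitive (by linarith) ht.1) hint
    fun t ht ↦ besselIPrimitive_sub_le_mul_sub hν hq1 hq hx ht).trans ?_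
  · simpa using ((hasDerivAt_id t).const_mul (1 + β)).exp
  · have := besselIPrimitive_nonneg hν hx
    calc q * besselIPrimitive ν x / x * ∫ t in (0 : ℝ)..x, exp ((1 + β) * t)
        ≤ q * besselIPrimitive ν x / x * (exp ((1 + β) * x) / (1 + β)) := by
          gcongr
          exact integral_exp_mul_le hβ' x
      _ = _ := by
          rw [besselIPrimitive, rpow_add_one hx.ne', add_mul, one_mul, exp_add, exp_neg]
          field_simp

lemma hasDerivAt_exp_mul_rpow_mul_besselI_add_one (β ν : ℝ) (hx : 0 < x) :
    HasDerivAt (fun t ↦ exp (β * t) * (t ^ ν * besselI (ν + 1) t))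
      (exp (β * x) * x ^ ν *
        (besselI ν x + β * besselI (ν + 1) x - besselI (ν + 1) x / x)) x := by
  refine ((((hasDerivAt_id x).const_mul β).exp).mul ((hasDerivAt_rpow_const (.inl hx.ne')).mul
    (hasDerivAt_besselI_add_one ν hx))).congr_deriv ?_
  simp only [id, Pi.mul_apply, rpow_sub_one hx.ne']
  field_simp
  ring

lemma mul_besselI_le_besselI_add_mul_besselI_add_one_sub (hβ : -1 ≤ β) (hβ0 : β ≤ 0)
    (hν : 1 / 2 ≤ ν) (hx : 0 < x) :
    (2 * ν + 1) * (1 + β) / (2 * (ν + 1)) * besselI ν x ≤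
      besselI ν x + β * besselI (ν + 1) x - besselI (ν + 1) x / x := by
  have hν' : 0 < 2 * (ν + 1) := by linarith
  have hquot : besselI (ν + 1) x / x ≤ besselI ν x / (2 * (ν + 1)) := by
    rw [div_le_div_iff₀ hx hν']
    linarith [two_mul_add_one_mul_besselI_add_one_le (by linarith : -3 < ν) hx]
  have hgap : 0 ≤ besselI ν x - besselI (ν + 1) x / x - besselI (ν + 1) x := by
    have := add_mul_besselI_add_one_le (by linarith : -(1 / 2) < ν) hx
    have := besselI_pos (by linarith : -1 < ν + 1) hx
    rw [sub_sub, sub_nonneg, div_add' _ _ _ hx.ne', div_le_iff₀ hx]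
    nlinarith
  calc (2 * ν + 1) * (1 + β) / (2 * (ν + 1)) * besselI ν x
      = (1 + β) * (besselI ν x - besselI ν x / (2 * (ν + 1))) := by field_simp; ring
    _ ≤ (1 + β) * (besselI ν x - besselI (ν + 1) x / x) := by
        gcongr
        linarith
    _ ≤ (1 + β) * (besselI ν x - besselI (ν + 1) x / x) -
          β * (besselI ν x - besselI (ν + 1) x / x - besselI (ν + 1) x) := by
        nlinarith
    _ = _ := by ring

lemma integral_exp_mul_rpow_mul_besselI_le_mul_besselI_add_one (hβ : -1 < β) (hβ0 : β ≤ 0)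
    (hν : 1 / 2 ≤ ν) (hx : 0 < x) :
    ∫ t in (0 : ℝ)..x, exp (β * t) * t ^ ν * besselI ν t ≤
      2 * (ν + 1) / ((2 * ν + 1) * (1 + β)) * (exp (β * x) * x ^ ν * besselI (ν + 1) x) := by
  set c := (2 * ν + 1) * (1 + β) / (2 * (ν + 1))
  have hint := intervalIntegrable_mul_rpow_mul_besselI
    (by fun_prop : Continuous fun t ↦ exp (β * t)) (by linarith : -(1 / 2) < ν) hx.le
  have hcont : ContinuousOn (fun t ↦ exp (β * t) * (t ^ ν * besselI (ν + 1) t)) (Set.Icc 0 x) :=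
    (by fun_prop : Continuous fun t ↦ exp (β * t)).continuousOn.mul
      ((continuousOn_rpow_mul_besselI (by linarith) (by linarith)).mono Set.Icc_subset_Ici_self)
  have hle := integral_le_sub_of_hasDeriv_right_of_le hx.le hcont
    (fun t ht ↦ (hasDerivAt_exp_mul_rpow_mul_besselI_add_one β ν ht.1).hasDerivWithinAt)
    ((intervalIntegrable_iff_integrableOn_Icc_of_le hx.le).mp (hint.const_mul c)) fun t ht ↦ by
      have ht0 := ht.1
      calc c * (exp (β * t) * t ^ ν * besselI ν t)
          = exp (β * t) * t ^ ν * (c * besselI ν t) := by ring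
        _ ≤ _ := by
          gcongr
          exact mul_besselI_le_besselI_add_mul_besselI_add_one_sub hβ.le hβ0 hν ht0
  have hc : 0 < c := div_pos (mul_pos (by linarith) (by linarith)) (by linarith)
  rw [intervalIntegral.integral_const_mul, zero_rpow (by linarith), zero_mul, mul_zero, sub_zero,
    ← le_div_iff₀' hc] at hle
  have hβ' : 0 < 1 + β := by linarith
  refine hle.trans_eq ?_
  simp only [c]
  field_simp

end IntegralBounds

section Main

variable {β ν x : ℝ}

lemma exp_mul_besselK_div_mul_le {c S y : ℝ} (hx : 0 < x)
    (hS : S ≤ c * (exp (β * x) * x ^ ν * y)) :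
    exp (-β * x) * besselK (ν + 1) x / x ^ (ν - 1) * S ≤ c * (x * y * besselK (ν + 1) x) := by
  have hK := besselK_nonneg (ν + 1) x
  refine (mul_le_mul_of_nonneg_left hS (by positivity)).trans_eq ?_
  rw [neg_mul, exp_neg, rpow_sub_one hx.ne']
  field_simp

lemma exp_mul_besselK_div_mul_integral_le_max (hβ : -1 < β) (hν : -(1 / 2) < ν) (hx : 0 < x) :
    exp (-β * x) * besselK (ν + 1) x / x ^ (ν - 1) *
        ∫ t in (0 : ℝ)..x, exp (β * t) * t ^ ν * besselI ν t ≤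
      3 * max 1 (2 * ν + 1) / (2 * (2 * ν + 1) * (1 + β)) := by
  have hν' : 0 < 2 * ν + 1 := by linarith
  have hβ' : 0 < 1 + β := by linarith
  refine (exp_mul_besselK_div_mul_le hx (integral_exp_mul_rpow_mul_besselI_le_mul_add hβ hν
    (le_max_left 1 (2 * ν + 1)) (le_max_right _ _) hx)).trans ?_
  have hsum : x * (besselI ν x + besselI (ν + 1) x) * besselK (ν + 1) x ≤ 3 / 2 := by
    linarith [mul_besselI_mul_besselK_add_one_le_one (by linarith : -1 < ν) hx,
      mul_besselI_add_one_mul_besselK_add_one_le_half hν hx]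
  calc _ ≤ max 1 (2 * ν + 1) / ((2 * ν + 1) * (1 + β)) * (3 / 2) := by gcongr
    _ = _ := by field_simp

lemma exp_mul_besselK_div_mul_integral_le (hβ : -1 < β) (hβ0 : β ≤ 0) (hν : 1 / 2 ≤ ν)
    (hx : 0 < x) :
    exp (-β * x) * besselK (ν + 1) x / x ^ (ν - 1) *
        ∫ t in (0 : ℝ)..x, exp (β * t) * t ^ ν * besselI ν t ≤
      (2 * ν + 2) / (2 * (2 * ν + 1) * (1 + β)) := by
  have hβ' : 0 < 1 + β := by linarith
  refine (exp_mul_besselK_div_mul_le hx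
    (integral_exp_mul_rpow_mul_besselI_le_mul_besselI_add_one hβ hβ0 hν hx)).trans ?_
  have hhalf := mul_besselI_add_one_mul_besselK_add_one_le_half (by linarith : -(1 / 2) < ν) hx
  calc _ ≤ 2 * (ν + 1) / ((2 * ν + 1) * (1 + β)) * (1 / 2) := by gcongr
    _ = _ := by field_simp

theorem stmt_13_general (β ν : ℝ) (hβ : -1 < β) (hβν : β ≤ 0 ∨ ν < 1) (hν : -(1 / 2) < ν)
    (x : ℝ) (hx : 0 < x) :
    exp (-β * x) * besselK (ν + 1) x / x ^ (ν - 1) *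
        ∫ t in (0 : ℝ)..x, exp (β * t) * t ^ ν * besselI ν t <
      (2 * ν + 7) / (2 * (2 * ν + 1) * (1 + β)) := by
  have hden : 0 < 2 * (2 * ν + 1) * (1 + β) := mul_pos (by linarith) (by linarith)
  rcases lt_or_ge ν 1 with hν1 | hν1
  · refine (exp_mul_besselK_div_mul_integral_le_max hβ hν hx).trans_lt ?_
    gcongr
    rw [mul_max_of_nonneg _ _ zero_le_three]
    exact max_lt (by linarith) (by linarith)
  · refine (exp_mul_besselK_div_mul_integral_le hβ (hβν.resolve_right hν1.not_gt)
      (by linarith) hx).trans_lt ?_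
    gcongr
    norm_num

end Main

theorem stmt_13 (β ν : ℝ) (hβ0 : -1 < β) (hβ1 : β < 0) (hν : -(1/2) < ν) (x : ℝ) (hx : 0 < x) :
    (Real.exp (-β * x) * besselK (ν + 1) x / x ^ (ν - 1)) *
        ∫ t in (0 : ℝ)..x, Real.exp (β * t) * t ^ ν * besselI ν t <
      (2 * ν + 7) / (2 * (2 * ν + 1) * (1 + β)) :=
  stmt_13_general β ν hβ0 (.inl hβ1.le) hν x hx
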